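/- non(Sfin(B_Ω,B_T)) = non(Sfin(Ω,T)) = 𝔭; that is, the minimal cardinality of a set of real numbers not satisfying Sfin(B_Ω,B_T), and the minimal cardinality of a set of real numbers not satisfying Sfin(Ω,T), both equal 𝔭. -/

import Mathlib

/-!
For a family of proper subsets `U i`, indexed by a countable set, write `trace U x = {i | x ∈ U i}`.
The family is an ω-cover as soon as all traces lie in a common proper filter, and an infinite `a`
which is almost contained in every trace indexes a γ-subcover, which is a τ-cover. Index the
disjoint union of a sequence of ω-covers by itself, and let `Y` consist of the traces and, for each
`j`, of the set of indices coming from all but the first `j` covers; `Y` is centered. If the space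
has fewer than `𝔭` points, then `Y` has a pseudo-intersection, which picks finitely many sets from
each cover and gives a γ-cover.

Conversely, let `Y` be a centered family of size `𝔭` without pseudo-intersection. Every family of
sets of naturals is the family of traces of a sequence of clopen subsets of some set of reals, since
the Cantor set embeds in `ℝ`. Realize in this way `Y` together with the sets `b ⇨ c = bᶜ ∪ c` for
`b, c ∈ Y` and the cosingletons. The clopen sets form an ω-cover. Suppose that `a` indexes a
τ-subcover. Comparing the traces `b` and `b ⇨ c` on `a` shows that `a ∩ b ⊆* c` or `a ⊆* b`. Hence
`a` is a pseudo-intersection of `Y`, or else `a ∩ b` is one for some `b ∈ Y`.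
-/

open Set

namespace TauCoverPaper

/-- `a ⊆* b`: `a \ b` is finite. -/
def AlmostSubset (a b : Set ℕ) : Prop := (a \ b).Finite

/-- `Y` is linearly quasiordered by `⊆*`. -/
def LinQuasi (Y : Set (Set ℕ)) : Prop :=
  ∀ a ∈ Y, ∀ b ∈ Y, AlmostSubset a b ∨ AlmostSubset b a

/-- `a` is a pseudo-intersection of the family `Y`. -/
def PseudoIntersection (a : Set ℕ) (Y : Set (Set ℕ)) : Prop :=
  a.Infinite ∧ ∀ b ∈ Y, AlmostSubset a b

/-- `Y` is centered: every nonempty finite subfamily has infinite intersection. -/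
def Centered (Y : Set (Set ℕ)) : Prop :=
  ∀ F : Set (Set ℕ), F ⊆ Y → F.Finite → F.Nonempty → (⋂₀ F).Infinite

/-- A tower: a family of infinite subsets of `ℕ`, linearly quasiordered by `⊆*`,
with no pseudo-intersection. -/
def IsTower (Y : Set (Set ℕ)) : Prop :=
  (∀ a ∈ Y, a.Infinite) ∧ LinQuasi Y ∧ ¬ ∃ a, PseudoIntersection a Y

variable {α : Type}

/-- A cover of the space `α`: the union is everything, and the whole space is
not a member. -/
def IsCover (𝒰 : Set (Set α)) : Prop := ⋃₀ 𝒰 = univ ∧ univ ∉ 𝒰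

/-- A large cover: each point belongs to infinitely many members. -/
def IsLargeCover (𝒰 : Set (Set α)) : Prop :=
  IsCover 𝒰 ∧ ∀ x : α, {U ∈ 𝒰 | x ∈ U}.Infinite

/-- An ω-cover: each finite set is contained in some member. -/
def IsOmegaCover (𝒰 : Set (Set α)) : Prop :=
  IsCover 𝒰 ∧ ∀ F : Set α, F.Finite → ∃ U ∈ 𝒰, F ⊆ U

/-- A γ-cover: infinite, and each point belongs to all but finitely many members. -/
def IsGammaCover (𝒰 : Set (Set α)) : Prop :=
  IsCover 𝒰 ∧ 𝒰.Infinite ∧ ∀ x : α, {U ∈ 𝒰 | x ∉ U}.Finite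

/-- A τ-cover: a large cover such that for all `x, y`, one of the sets
`{U : x ∈ U, y ∉ U}`, `{U : y ∈ U, x ∉ U}` is finite. -/
def IsTauCover (𝒰 : Set (Set α)) : Prop :=
  IsLargeCover 𝒰 ∧ ∀ x y : α,
    {U ∈ 𝒰 | x ∈ U ∧ y ∉ U}.Finite ∨ {U ∈ 𝒰 | y ∈ U ∧ x ∉ U}.Finite

/-- A τ*-cover: a large, countably infinite cover which, enumerated bijectively
as `⟨Uₙ⟩`, admits for each point `y` an infinite `r y ⊆ {n | y ∈ Uₙ}` such that
the family `{r y}` is linearly quasiordered by `⊆*`. -/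
def IsTauStarCover (𝒰 : Set (Set α)) : Prop :=
  IsLargeCover 𝒰 ∧
  ∃ U : ℕ → Set α, Function.Injective U ∧ Set.range U = 𝒰 ∧
    ∃ r : α → Set ℕ,
      (∀ y : α, (r y).Infinite ∧ r y ⊆ {n | y ∈ U n}) ∧
      (∀ y z : α, AlmostSubset (r y) (r z) ∨ AlmostSubset (r z) (r y))

/-- Ω : countable open ω-covers. -/
def OpenOmega (α : Type) [TopologicalSpace α] : Set (Set (Set α)) :=
  {𝒰 | 𝒰.Countable ∧ (∀ U ∈ 𝒰, IsOpen U) ∧ IsOmegaCover 𝒰}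

/-- Γ : countable open γ-covers. -/
def OpenGamma (α : Type) [TopologicalSpace α] : Set (Set (Set α)) :=
  {𝒰 | 𝒰.Countable ∧ (∀ U ∈ 𝒰, IsOpen U) ∧ IsGammaCover 𝒰}

/-- T : countable open τ-covers. -/
def OpenTau (α : Type) [TopologicalSpace α] : Set (Set (Set α)) :=
  {𝒰 | 𝒰.Countable ∧ (∀ U ∈ 𝒰, IsOpen U) ∧ IsTauCover 𝒰}

/-- T* : countable open τ*-covers. -/
def OpenTauStar (α : Type) [TopologicalSpace α] : Set (Set (Set α)) :=
  {𝒰 | 𝒰.Countable ∧ (∀ U ∈ 𝒰, IsOpen U) ∧ IsTauStarCover 𝒰}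

/-- B_Ω : countable Borel ω-covers. -/
def BorelOmega (α : Type) [MeasurableSpace α] : Set (Set (Set α)) :=
  {𝒰 | 𝒰.Countable ∧ (∀ U ∈ 𝒰, MeasurableSet U) ∧ IsOmegaCover 𝒰}

/-- B_Γ : countable Borel γ-covers. -/
def BorelGamma (α : Type) [MeasurableSpace α] : Set (Set (Set α)) :=
  {𝒰 | 𝒰.Countable ∧ (∀ U ∈ 𝒰, MeasurableSet U) ∧ IsGammaCover 𝒰}

/-- B_T : countable Borel τ-covers. -/
def BorelTau (α : Type) [MeasurableSpace α] : Set (Set (Set α)) :=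
  {𝒰 | 𝒰.Countable ∧ (∀ U ∈ 𝒰, MeasurableSet U) ∧ IsTauCover 𝒰}

/-- The selection principle S₁(𝔘,𝔙). -/
def S1 (𝔘 𝔙 : Set (Set (Set α))) : Prop :=
  ∀ 𝒰 : ℕ → Set (Set α), (∀ n, 𝒰 n ∈ 𝔘) →
    ∃ V : ℕ → Set α, (∀ n, V n ∈ 𝒰 n) ∧ Set.range V ∈ 𝔙

/-- The selection principle Sfin(𝔘,𝔙). -/
def Sfin (𝔘 𝔙 : Set (Set (Set α))) : Prop :=
  ∀ 𝒰 : ℕ → Set (Set α), (∀ n, 𝒰 n ∈ 𝔘) →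
    ∃ F : ℕ → Set (Set α), (∀ n, (F n).Finite ∧ F n ⊆ 𝒰 n) ∧ (⋃ n, F n) ∈ 𝔙

/-- The selection principle Ufin(𝔘,𝔙). -/
def Ufin (𝔘 𝔙 : Set (Set (Set α))) : Prop :=
  ∀ 𝒰 : ℕ → Set (Set α), (∀ n, 𝒰 n ∈ 𝔘) →
    (∀ n, ¬ ∃ F : Set (Set α), F ⊆ 𝒰 n ∧ F.Finite ∧ ⋃₀ F = univ) →
    ∃ F : ℕ → Set (Set α), (∀ n, (F n).Finite ∧ F n ⊆ 𝒰 n) ∧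
      Set.range (fun n => ⋃₀ (F n)) ∈ 𝔙

/-- binom(𝔘,𝔙): each member of 𝔘 contains a subfamily belonging to 𝔙. -/
def Binom (𝔘 𝔙 : Set (Set (Set α))) : Prop :=
  ∀ 𝒰 ∈ 𝔘, ∃ 𝒱 ⊆ 𝒰, 𝒱 ∈ 𝔙

/-- Borel measurability of a map into `P(ℕ)` (identified with the Cantor
space via characteristic functions): each coordinate is measurable. -/
def BorelMeasSets {β : Type} [MeasurableSpace β] (f : β → Set ℕ) : Prop :=
  ∀ n : ℕ, MeasurableSet {x | n ∈ f x}

/-- The excluded middle property for a family `Y ⊆ ℕ^ℕ`. -/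
def ExcludedMiddleProp (Y : Set (ℕ → ℕ)) : Prop :=
  ∃ g : ℕ → ℕ,
    (∀ f ∈ Y, {n | f n < g n}.Infinite) ∧
    ∀ f ∈ Y, ∀ h ∈ Y,
      {n | f n < g n ∧ g n ≤ h n}.Finite ∨ {n | h n < g n ∧ g n ≤ f n}.Finite

/-- non(J): the minimal cardinality of a set of reals not satisfying `J`. -/
noncomputable def nonCard (J : Set ℝ → Prop) : Cardinal :=
  sInf {c : Cardinal | ∃ X : Set ℝ, ¬ J X ∧ Cardinal.mk ↥X = c}

/-- add(J): the minimal cardinality of a family of sets of reals, each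
satisfying `J`, whose union does not satisfy `J`. -/
noncomputable def addCard (J : Set ℝ → Prop) : Cardinal :=
  sInf {c : Cardinal | ∃ 𝔉 : Set (Set ℝ),
    (∀ A ∈ 𝔉, J A) ∧ ¬ J (⋃₀ 𝔉) ∧ Cardinal.mk ↥𝔉 = c}

/-- 𝔱 : the minimal cardinality of a tower. -/
noncomputable def towerCard : Cardinal :=
  sInf {c : Cardinal | ∃ Y : Set (Set ℕ), IsTower Y ∧ Cardinal.mk ↥Y = c}

/-- 𝔭 : the minimal cardinality of a centered family in `[ℕ]^∞` with no
pseudo-intersection. -/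
noncomputable def pCard : Cardinal :=
  sInf {c : Cardinal | ∃ Y : Set (Set ℕ), (∀ a ∈ Y, a.Infinite) ∧ Centered Y ∧
    (¬ ∃ a, PseudoIntersection a Y) ∧ Cardinal.mk ↥Y = c}

section PseudoIntersections

open Cardinal hiding univ
open Filter

theorem centered_iff_exists_filter {Y : Set (Set ℕ)} :
    Centered Y ↔ ∃ f : Filter ℕ, f.NeBot ∧ f ≤ cofinite ∧ Y ⊆ f.sets := by
  constructor
  · intro hY
    refine ⟨generate Y ⊓ cofinite, ?_, inf_le_right, le_generate_iff.1 inf_le_left⟩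
    rw [neBot_iff, Ne, ← disjoint_iff, disjoint_cofinite_right]
    rintro ⟨s, hs, hs_fin⟩
    obtain ⟨F, hFY, hF, hFs⟩ := mem_generate_iff.1 hs
    rcases F.eq_empty_or_nonempty with rfl | hF_ne
    · exact infinite_univ (hs_fin.subset (by simpa using hFs))
    · exact hY F hFY hF hF_ne (hs_fin.subset hFs)
  · rintro ⟨f, hf_ne, hf, hY⟩ F hFY hF - hF_fin
    have hF_mem : ⋂₀ F ∈ f := (sInter_mem hF).2 fun a ha => hY (hFY ha)
    exact hf_ne.ne ((disjoint_cofinite_right.2 ⟨_, hF_mem, hF_fin⟩).eq_bot_of_le hf)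

theorem Centered.infinite_of_mem {Y : Set (Set ℕ)} (hY : Centered Y) {a : Set ℕ} (ha : a ∈ Y) :
    a.Infinite := by
  simpa only [sInter_singleton] using
    hY {a} (singleton_subset_iff.2 ha) (finite_singleton a) (singleton_nonempty a)

theorem Centered.exists_pseudoIntersection_of_finite {Y : Set (Set ℕ)} (hY : Centered Y)
    (hY_fin : Y.Finite) : ∃ a, PseudoIntersection a Y := by
  rcases Y.eq_empty_or_nonempty with rfl | hY_ne
  · exact ⟨univ, infinite_univ, fun b hb => hb.elim⟩
  · refine ⟨⋂₀ Y, hY Y Subset.rfl hY_fin hY_ne, fun b hb => ?_⟩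
    rw [AlmostSubset, sdiff_eq_empty.2 (sInter_subset_of_mem hb)]
    exact finite_empty

theorem not_exists_pseudoIntersection_ultrafilter (f : Ultrafilter ℕ) :
    ¬ ∃ a, PseudoIntersection a (f : Filter ℕ).sets := by
  rintro ⟨a, ha, ha_sub⟩
  obtain ⟨b, c, rfl, hbc, hcard⟩ := ha.exists_union_disjoint_cardinal_eq_of_infinite
  obtain ⟨e⟩ := Cardinal.eq.1 hcard
  have hiff : b.Infinite ↔ c.Infinite := by
    rw [← infinite_coe_iff, e.infinite_iff, infinite_coe_iff]
  obtain ⟨hb, hc⟩ : b.Infinite ∧ c.Infinite := by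
    rcases infinite_union.1 ha with hb | hc
    exacts [⟨hb, hiff.1 hb⟩, ⟨hiff.2 hc, hc⟩]
  rcases f.mem_or_compl_mem b with hbf | hbf
  · exact hc ((ha_sub b hbf).subset fun n hn => ⟨Or.inr hn, hbc.notMem_of_mem_right hn⟩)
  · exact hb ((ha_sub bᶜ hbf).subset fun n hn => ⟨Or.inl hn, not_not_intro hn⟩)

theorem exists_centered_mk_eq_pCard :
    ∃ Y, Centered Y ∧ (¬ ∃ a, PseudoIntersection a Y) ∧ #Y = pCard := by
  have hyper_centered : Centered (hyperfilter ℕ : Filter ℕ).sets :=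
    centered_iff_exists_filter.2 ⟨_, inferInstance, hyperfilter_le_cofinite, Subset.rfl⟩
  obtain ⟨Y, -, hY, hY_no, hY_card⟩ := csInf_mem
    (⟨_, _, fun _ => hyper_centered.infinite_of_mem, hyper_centered,
      not_exists_pseudoIntersection_ultrafilter _, rfl⟩ :
      {c : Cardinal | ∃ Y : Set (Set ℕ), (∀ a ∈ Y, a.Infinite) ∧ Centered Y ∧
        (¬ ∃ a, PseudoIntersection a Y) ∧ #Y = c}.Nonempty)
  exact ⟨Y, hY, hY_no, hY_card⟩

theorem Centered.exists_pseudoIntersection_of_mk_lt {Y : Set (Set ℕ)} (hY : Centered Y)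
    (hY_card : #Y < pCard) : ∃ a, PseudoIntersection a Y := by
  by_contra hY_no
  exact hY_card.not_ge (csInf_le' ⟨Y, fun _ => hY.infinite_of_mem, hY, hY_no, rfl⟩)

theorem exists_infinite_forall_sdiff_finite {ι : Type} [Countable ι] {f : Filter ι} [f.NeBot]
    (hf : f ≤ cofinite) {Y : Set (Set ι)} (hY : Y ⊆ f.sets) (hY_card : #Y < pCard) :
    ∃ a : Set ι, a.Infinite ∧ ∀ b ∈ Y, (a \ b).Finite := by
  have hι : Infinite ι := by
    by_contra hι
    rw [not_infinite_iff_finite] at hι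
    exact NeBot.ne ‹_› (le_bot_iff.1 (cofinite_eq_bot (α := ι) ▸ hf))
  obtain ⟨e⟩ : Nonempty (ι ≃ ℕ) := nonempty_equiv_of_countable
  have hcent : Centered (image e '' Y) := by
    refine centered_iff_exists_filter.2 ⟨f.map e, inferInstance, ?_, ?_⟩
    · exact (map_mono hf).trans e.injective.tendsto_cofinite
    · rintro _ ⟨b, hb, rfl⟩
      exact image_mem_map (hY hb)
  obtain ⟨a, ha, ha_sub⟩ := hcent.exists_pseudoIntersection_of_mk_lt (mk_image_le.trans_lt hY_card)
  refine ⟨e ⁻¹' a, ha.preimage (by simp), fun b hb => ?_⟩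
  refine ((ha_sub _ (mem_image_of_mem _ hb)).preimage e.injective.injOn).subset ?_
  rintro i ⟨hia, hib⟩
  exact ⟨hia, by simpa using hib⟩

end PseudoIntersections

section Traces

open Filter

/-- The set of indices of the members of `U` which contain `x`. The map `x ↦ trace U x`, known as
the Marczewski characteristic function of `U`, translates covering properties of `U` into
combinatorial properties of a family of sets of indices. -/
def trace {X ι : Type*} (U : ι → Set X) (x : X) : Set ι := {i | x ∈ U i}

theorem IsOmegaCover.infinite {𝒰 : Set (Set α)} (h𝒰 : IsOmegaCover 𝒰) : Infinite α := by
  by_contra hα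
  rw [not_infinite_iff_finite] at hα
  obtain ⟨U, hU, hU_univ⟩ := h𝒰.2 univ finite_univ
  exact h𝒰.1.2 (univ_subset_iff.1 hU_univ ▸ hU)

theorem IsGammaCover.isTauCover {𝒰 : Set (Set α)} (h𝒰 : IsGammaCover 𝒰) : IsTauCover 𝒰 := by
  obtain ⟨hcover, hinf, hmiss⟩ := h𝒰
  refine ⟨⟨hcover, fun x hx => hinf ?_⟩, fun x y => Or.inl ?_⟩
  · exact (hx.union (hmiss x)).subset fun U hU =>
      (em (x ∈ U)).imp (fun h => ⟨hU, h⟩) (fun h => ⟨hU, h⟩)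
  · exact (hmiss y).subset fun U hU => ⟨hU.1, hU.2.2⟩

theorem isOmegaCover_range_of_trace_mem {ι : Type*} {U : ι → Set α} (hU : ∀ i, U i ≠ univ)
    {f : Filter ι} [f.NeBot] (hf : ∀ x, trace U x ∈ f) : IsOmegaCover (range U) := by
  have hω : ∀ F : Set α, F.Finite → ∃ V ∈ range U, F ⊆ V := by
    intro F hF
    obtain ⟨i, hi⟩ := Filter.nonempty_of_mem ((biInter_mem hF).2 fun x _ => hf x)
    exact ⟨U i, mem_range_self i, fun x hx => mem_iInter₂.1 hi x hx⟩
  refine ⟨⟨eq_univ_of_forall fun x => ?_, fun ⟨i, hi⟩ => hU i hi⟩, hω⟩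
  obtain ⟨V, hV, hxV⟩ := hω {x} (finite_singleton x)
  exact ⟨V, hV, hxV rfl⟩

theorem isGammaCover_image {ι : Type*} {U : ι → Set α} (hU : ∀ i, U i ≠ univ) {a : Set ι}
    (ha : a.Infinite) (ha_sub : ∀ x, (a \ trace U x).Finite) : IsGammaCover (U '' a) := by
  have hinf : (U '' a).Infinite := by
    intro hfin
    refine ha (hfin.of_finite_fibers U ?_)
    rintro _ ⟨i, -, rfl⟩
    obtain ⟨x, hx⟩ := (ne_univ_iff_exists_notMem (U i)).1 (hU i)
    exact (ha_sub x).subset fun j ⟨hja, hj⟩ => ⟨hja, fun hxj => hx (hj ▸ hxj)⟩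
  refine ⟨⟨eq_univ_of_forall fun x => ?_, fun ⟨i, _, hi⟩ => hU i hi⟩, hinf, fun x => ?_⟩
  · obtain ⟨i, hia, hi⟩ := (ha.sdiff (ha_sub x)).nonempty
    exact ⟨U i, mem_image_of_mem U hia, by_contra fun hxi => hi ⟨hia, hxi⟩⟩
  · refine ((ha_sub x).image U).subset ?_
    rintro _ ⟨⟨i, hia, rfl⟩, hxi⟩
    exact mem_image_of_mem U ⟨hia, hxi⟩

theorem IsTauCover.infinite_inter_trace {ι : Type*} {U : ι → Set α} {a : Set ι}
    (ha : IsTauCover (U '' a)) (x : α) : (a ∩ trace U x).Infinite := by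
  intro hfin
  refine ha.1.2 x ((hfin.image U).subset ?_)
  rintro _ ⟨⟨i, hia, rfl⟩, hxi⟩
  exact mem_image_of_mem U ⟨hia, hxi⟩

theorem IsTauCover.linQuasi_inter_trace {U : ℕ → Set α} (hU : U.Injective) {a : Set ℕ}
    (ha : IsTauCover (U '' a)) : LinQuasi (range fun x => a ∩ trace U x) := by
  have almostSubset_of_finite : ∀ x y : α, {V ∈ U '' a | x ∈ V ∧ y ∉ V}.Finite →
      AlmostSubset (a ∩ trace U x) (a ∩ trace U y) := by
    intro x y hfin
    refine (hfin.preimage hU.injOn).subset ?_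
    rintro i ⟨⟨hia, hxi⟩, hyi⟩
    exact ⟨mem_image_of_mem U hia, hxi, fun hy => hyi ⟨hia, hy⟩⟩
  rintro _ ⟨x, rfl⟩ _ ⟨y, rfl⟩
  exact (ha.2 x y).imp (almostSubset_of_finite x y) (almostSubset_of_finite y x)

end Traces

section SelectionPrinciples

variable {𝔘 𝔘' 𝔙 𝔙' : Set (Set (Set α))}

theorem Sfin.binom (h : Sfin 𝔘 𝔙) : Binom 𝔘 𝔙 := by
  intro 𝒰 h𝒰
  obtain ⟨F, hF, hF_mem⟩ := h (fun _ => 𝒰) fun _ => h𝒰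
  exact ⟨⋃ n, F n, iUnion_subset fun n => (hF n).2, hF_mem⟩

theorem Binom.mono (h𝔘 : 𝔘' ⊆ 𝔘) (h𝔙 : 𝔙 ⊆ 𝔙') (h : Binom 𝔘 𝔙) : Binom 𝔘' 𝔙' := by
  intro 𝒰 h𝒰
  obtain ⟨𝒱, h𝒱𝒰, h𝒱⟩ := h 𝒰 (h𝔘 h𝒰)
  exact ⟨𝒱, h𝒱𝒰, h𝔙 h𝒱⟩

/-- The countable ω-covers whose members satisfy `P`: this is `Ω` when `P` is `IsOpen` and `B_Ω`
when `P` is `MeasurableSet`. -/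
def omegaCovers (P : Set α → Prop) : Set (Set (Set α)) :=
  {𝒰 | 𝒰.Countable ∧ (∀ U ∈ 𝒰, P U) ∧ IsOmegaCover 𝒰}

/-- The countable τ-covers whose members satisfy `P`: this is `T` when `P` is `IsOpen` and `B_T`
when `P` is `MeasurableSet`. -/
def tauCovers (P : Set α → Prop) : Set (Set (Set α)) :=
  {𝒰 | 𝒰.Countable ∧ (∀ U ∈ 𝒰, P U) ∧ IsTauCover 𝒰}

end SelectionPrinciples

section SmallSets

open Cardinal hiding univ
open Filter

theorem exists_filter_of_isOmegaCover {𝒰 : ℕ → Set (Set α)} (h𝒰 : ∀ n, IsOmegaCover (𝒰 n)) :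
    ∃ f : Filter (Σ n, 𝒰 n), f.NeBot ∧ Tendsto Sigma.fst f atTop ∧
      ∀ x, trace (fun i : Σ n, 𝒰 n => (i.2 : Set α)) x ∈ f := by
  choose V hV hSV using fun (S : Finset α) (n : ℕ) => (h𝒰 n).2 S S.finite_toSet
  let g : Finset α × ℕ → Σ n, 𝒰 n := fun p => ⟨p.2, V p.1 p.2, hV p.1 p.2⟩
  refine ⟨map g (atTop ×ˢ atTop), inferInstance, tendsto_map'_iff.2 tendsto_snd, fun x => ?_⟩
  have hx : ∀ᶠ p : Finset α × ℕ in atTop ×ˢ atTop, {x} ⊆ p.1 :=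
    tendsto_fst.eventually (eventually_ge_atTop {x})
  exact hx.mono fun p hp => hSV p.1 p.2 (Finset.singleton_subset_iff.1 hp)

theorem exists_finite_selection_isGammaCover (hα : #α < pCard) {𝒰 : ℕ → Set (Set α)}
    (h𝒰 : ∀ n, IsOmegaCover (𝒰 n)) (h𝒰_count : ∀ n, (𝒰 n).Countable) :
    ∃ F : ℕ → Set (Set α), (∀ n, (F n).Finite ∧ F n ⊆ 𝒰 n) ∧ IsGammaCover (⋃ n, F n) := by
  have hι : Countable (Σ n, 𝒰 n) := by
    have := fun n => (h𝒰_count n).to_subtype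
    infer_instance
  let U : (Σ n, 𝒰 n) → Set α := fun i => i.2
  have hU : ∀ i, U i ≠ univ := fun i hi => (h𝒰 i.1).1.2 (hi ▸ i.2.2)
  obtain ⟨f, hf_ne, hf_fst, hf_trace⟩ := exists_filter_of_isOmegaCover h𝒰
  have hf : f ≤ cofinite :=
    (Nat.cofinite_eq_atTop ▸ hf_fst).le_comap.trans (comap_cofinite_le Sigma.fst)
  have hY_card : #(range (trace U) ∪ range fun j : ℕ => {i : Σ n, 𝒰 n | j ≤ i.1} :
      Set (Set (Σ n, 𝒰 n))) < pCard := by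
    have := (h𝒰 0).infinite
    calc _ ≤ #α + #ℕ := (mk_union_le _ _).trans (add_le_add mk_range_le mk_range_le)
      _ = #α := by rw [mk_nat, add_eq_left (aleph0_le_mk α) (aleph0_le_mk α)]
      _ < pCard := hα
  obtain ⟨a, ha, ha_sub⟩ := exists_infinite_forall_sdiff_finite hf
    (union_subset (range_subset_iff.2 hf_trace)
      (range_subset_iff.2 fun j => hf_fst.eventually_ge_atTop j)) hY_card
  refine ⟨fun n => U '' {i ∈ a | i.1 = n}, fun n => ⟨Finite.image U ?_, ?_⟩, ?_⟩
  · refine (ha_sub _ (Or.inr (mem_range_self (n + 1)))).subset ?_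
    rintro i ⟨hia, rfl⟩
    exact ⟨hia, Nat.not_succ_le_self _⟩
  · rintro _ ⟨i, ⟨-, rfl⟩, rfl⟩
    exact i.2.2
  · have hunion : ⋃ n, {i ∈ a | i.1 = n} = a := by ext; simp
    rw [← image_iUnion, hunion]
    exact isGammaCover_image hU ha fun x => ha_sub _ (Or.inl (mem_range_self x))

theorem sfin_omegaCovers_tauCovers_of_mk_lt (hα : #α < pCard) (P : Set α → Prop) :
    Sfin (omegaCovers P) (tauCovers P) := by
  intro 𝒰 h𝒰
  obtain ⟨F, hF, hF_gamma⟩ :=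
    exists_finite_selection_isGammaCover hα (fun n => (h𝒰 n).2.2) fun n => (h𝒰 n).1
  refine ⟨F, hF, countable_iUnion fun n => (hF n).1.countable, fun V hV => ?_, hF_gamma.isTauCover⟩
  obtain ⟨n, hn⟩ := mem_iUnion.1 hV
  exact (h𝒰 n).2.1 V ((hF n).2 hn)

end SmallSets

section CriticalSets

open Cardinal hiding univ
open Filter

theorem exists_real_isClopen_range_trace_eq (Z : Set (Set ℕ)) :
    ∃ (X : Set ℝ) (U : ℕ → Set X),
      (∀ n, IsClopen (U n)) ∧ (trace U).Injective ∧ range (trace U) = Z := by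
  classical
  let φ := cantorSetHomeomorphNatToBool
  let s : cantorSet → Set ℕ := fun x => {n | φ x n = true}
  have hs_inj : s.Injective := fun x y hxy =>
    φ.injective (funext fun n => Bool.eq_iff_iff.2 (Set.ext_iff.1 hxy n))
  have hs_surj : s.Surjective := fun z => ⟨φ.symm fun n => decide (n ∈ z), by ext n; simp [s]⟩
  let X : Set ℝ := Subtype.val '' (s ⁻¹' Z)
  have hX : X ⊆ cantorSet := Subtype.coe_image_subset _ _
  refine ⟨X, fun n => {x | φ (inclusion hX x) n = true}, fun n => ?_,
    hs_inj.comp (inclusion_injective hX), ?_⟩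
  · exact (isClopen_discrete {true}).preimage
      ((continuous_apply n).comp (φ.continuous.comp (continuous_inclusion hX)))
  · change range (s ∘ inclusion hX) = Z
    have hincl : range (inclusion hX) = s ⁻¹' Z := by
      rw [range_inclusion]
      ext x
      simp [X]
    rw [range_comp, hincl, image_preimage_eq Z hs_surj]

/-- `Y` together with the implications `b ⇨ c = bᶜ ∪ c` between its members, which force a
τ-cover to compare `b` with `b ⇨ c`, and with the cosingletons, which make a family of sets with
these traces injective and without `univ`. -/
def implicationExtension (Y : Set (Set ℕ)) : Set (Set ℕ) :=
  Y ∪ image2 (· ⇨ ·) Y Y ∪ range fun n : ℕ => {n}ᶜ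

theorem mk_implicationExtension_le {Y : Set (Set ℕ)} (hY : Y.Infinite) :
    #(implicationExtension Y) ≤ #Y := by
  have h0 : ℵ₀ ≤ #Y := aleph0_le_mk_iff.2 hY.to_subtype
  have hY_image : #(image2 (· ⇨ ·) Y Y) ≤ #Y * #Y := by
    rw [← image_prod, ← mk_setProd]
    exact mk_image_le
  calc #(implicationExtension Y)
    _ ≤ #Y + #(image2 (· ⇨ ·) Y Y) + #(range fun n : ℕ => ({n}ᶜ : Set ℕ)) :=
        (mk_union_le _ _).trans (add_le_add_left (mk_union_le _ _) _)
    _ ≤ #Y + #Y * #Y + ℵ₀ := add_le_add (add_le_add_right hY_image _) (mk_range_le.trans mk_nat.le)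
    _ = #Y := by rw [mul_eq_self h0, add_eq_self h0, add_eq_left h0 h0]

theorem implicationExtension_subset_sets {Y : Set (Set ℕ)} {f : Filter ℕ} (hf : f ≤ cofinite)
    (hY : Y ⊆ f.sets) : implicationExtension Y ⊆ f.sets := by
  rintro _ ((hb | ⟨b, -, c, hc, rfl⟩) | ⟨n, rfl⟩)
  · exact hY hb
  · exact mem_of_superset (hY hc) le_himp
  · exact le_cofinite_iff_compl_singleton_mem.1 hf n

theorem exists_pseudoIntersection_of_linQuasi {Y : Set (Set ℕ)} {a : Set ℕ}
    (ha_inf : ∀ z ∈ implicationExtension Y, (a ∩ z).Infinite)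
    (ha_lin : LinQuasi ((a ∩ ·) '' implicationExtension Y)) : ∃ d, PseudoIntersection d Y := by
  have hY : ∀ b ∈ Y, b ∈ implicationExtension Y := fun b hb => Or.inl (Or.inl hb)
  have hdich : ∀ b ∈ Y, ∀ c ∈ Y, AlmostSubset (a ∩ b) c ∨ AlmostSubset a b := by
    intro b hb c hc
    have hbc : b ⇨ c ∈ implicationExtension Y := Or.inl (Or.inr (mem_image2_of_mem hb hc))
    rw [himp_eq] at hbc
    refine (ha_lin _ (mem_image_of_mem _ (hY b hb)) _ (mem_image_of_mem _ hbc)).imp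
      (fun h => h.subset ?_) fun h => h.subset ?_
    · rintro n ⟨⟨hna, hnb⟩, hnc⟩
      exact ⟨⟨hna, hnb⟩, fun h => h.2.elim hnc fun hnb' => hnb' hnb⟩
    · rintro n ⟨hna, hnb⟩
      exact ⟨⟨hna, Or.inr hnb⟩, fun h => hnb h.2⟩
  by_cases hall : ∀ b ∈ Y, AlmostSubset a b
  · exact ⟨a, (ha_inf {0}ᶜ (Or.inr (mem_range_self 0))).mono inter_subset_left, hall⟩
  · push Not at hall
    obtain ⟨b, hb, hab⟩ := hall
    exact ⟨a ∩ b, ha_inf b (hY b hb), fun c hc => (hdich b hb c hc).resolve_right hab⟩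

theorem ne_univ_of_compl_singleton_mem_range_trace {X ι : Type*} {U : ι → Set X} {i : ι}
    (hi : {i}ᶜ ∈ range (trace U)) : U i ≠ univ := by
  obtain ⟨x, hx⟩ := hi
  have hxU : ∀ j, x ∈ U j ↔ j ≠ i := Set.ext_iff.1 hx
  exact (ne_univ_iff_exists_notMem _).2 ⟨x, fun hxi => (hxU i).1 hxi rfl⟩

theorem injective_of_compl_singleton_mem_range_trace {X ι : Type*} {U : ι → Set X}
    (hU : ∀ i, {i}ᶜ ∈ range (trace U)) : U.Injective := by
  intro i j hij
  by_contra hne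
  obtain ⟨x, hx⟩ := hU i
  have hxU : ∀ k, x ∈ U k ↔ k ≠ i := Set.ext_iff.1 hx
  exact (hxU i).1 (hij ▸ (hxU j).2 (Ne.symm hne)) rfl

theorem not_isTauCover_of_range_trace_eq {Y : Set (Set ℕ)} (hY_no : ¬ ∃ a, PseudoIntersection a Y)
    {U : ℕ → Set α} (hU : range (trace U) = implicationExtension Y) {𝒱 : Set (Set α)}
    (h𝒱 : 𝒱 ⊆ range U) : ¬ IsTauCover 𝒱 := by
  intro h𝒱_tau
  have hU_inj : U.Injective :=
    injective_of_compl_singleton_mem_range_trace fun n => hU ▸ Or.inr (mem_range_self n)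
  obtain ⟨a, rfl⟩ := subset_range_iff_exists_image_eq.1 h𝒱
  refine hY_no (exists_pseudoIntersection_of_linQuasi (a := a) ?_ ?_)
  · rw [← hU, forall_mem_range]
    exact h𝒱_tau.infinite_inter_trace
  · rw [← hU, ← range_comp]
    exact h𝒱_tau.linQuasi_inter_trace hU_inj

theorem Centered.exists_real_not_binom {Y : Set (Set ℕ)} (hY : Centered Y)
    (hY_no : ¬ ∃ a, PseudoIntersection a Y) :
    ∃ X : Set ℝ, #X ≤ #Y ∧ ¬ Binom (omegaCovers IsClopen) {𝒱 : Set (Set X) | IsTauCover 𝒱} := by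
  have hY_inf : Y.Infinite := fun h => hY_no (hY.exists_pseudoIntersection_of_finite h)
  obtain ⟨f, hf_ne, hf, hYf⟩ := centered_iff_exists_filter.1 hY
  obtain ⟨X, U, hU_clopen, htrace_inj, hU⟩ :=
    exists_real_isClopen_range_trace_eq (implicationExtension Y)
  have hU_ne : ∀ n, U n ≠ univ := fun n =>
    ne_univ_of_compl_singleton_mem_range_trace (hU ▸ Or.inr (mem_range_self n))
  have hU_omega : IsOmegaCover (range U) := isOmegaCover_range_of_trace_mem hU_ne fun x =>
    implicationExtension_subset_sets hf hYf (hU ▸ mem_range_self x)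
  refine ⟨X, ?_, fun hbinom => ?_⟩
  · rw [← mk_range_eq _ htrace_inj, hU]
    exact mk_implicationExtension_le hY_inf
  · obtain ⟨𝒱, h𝒱, h𝒱_tau⟩ :=
      hbinom (range U) ⟨countable_range U, forall_mem_range.2 hU_clopen, hU_omega⟩
    exact not_isTauCover_of_range_trace_eq hY_no hU h𝒱 h𝒱_tau

end CriticalSets

theorem nonCard_eq_of_forall_lt {J : Set ℝ → Prop} {κ : Cardinal}
    (hlt : ∀ X : Set ℝ, Cardinal.mk X < κ → J X) (hle : ∃ X : Set ℝ, Cardinal.mk X ≤ κ ∧ ¬ J X) :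
    nonCard J = κ := by
  obtain ⟨X, hX, hJX⟩ := hle
  have hmem : Cardinal.mk X ∈ {c | ∃ Z : Set ℝ, ¬ J Z ∧ Cardinal.mk Z = c} := ⟨X, hJX, rfl⟩
  refine le_antisymm ((csInf_le' hmem).trans hX) (le_csInf ⟨_, hmem⟩ ?_)
  rintro _ ⟨Z, hJZ, rfl⟩
  exact not_lt.1 fun hZ => hJZ (hlt Z hZ)

theorem statement14_general (P : ∀ X : Set ℝ, Set X → Prop)
    (hP : ∀ (X : Set ℝ) (U : Set X), IsClopen U → P X U) :
    nonCard (fun X : Set ℝ => Sfin (omegaCovers (P X)) (tauCovers (P X))) = pCard := by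
  refine nonCard_eq_of_forall_lt (fun X hX => sfin_omegaCovers_tauCovers_of_mk_lt hX (P X)) ?_
  obtain ⟨Y, hY, hY_no, hY_card⟩ := exists_centered_mk_eq_pCard
  obtain ⟨X, hX, hX_binom⟩ := hY.exists_real_not_binom hY_no
  refine ⟨X, hX.trans_eq hY_card, fun hSfin => hX_binom (hSfin.binom.mono ?_ ?_)⟩
  · exact fun 𝒰 h𝒰 => ⟨h𝒰.1, fun U hU => hP X U (h𝒰.2.1 U hU), h𝒰.2.2⟩
  · exact fun 𝒱 h𝒱 => h𝒱.2.2

/-- non(Sfin(B_Ω,B_T)) = non(Sfin(Ω,T)) = 𝔭. -/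
theorem statement14 :
    nonCard (fun X : Set ℝ => Sfin (BorelOmega ↥X) (BorelTau ↥X)) = pCard ∧
    nonCard (fun X : Set ℝ => Sfin (OpenOmega ↥X) (OpenTau ↥X)) = pCard :=
  ⟨statement14_general (fun _ => MeasurableSet) fun _ _ hU => hU.isOpen.measurableSet,
    statement14_general (fun _ => IsOpen) fun _ _ hU => hU.isOpen⟩

end TauCoverPaper
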